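/- Let p be an odd prime and let Q₈ be the quaternion group of order 8. Then ℤ_(p)Q₈ is not semiperfect. -/

import Mathlib

/-- The Jacobson radical of a (possibly noncommutative) ring, as a two-sided ideal:
the intersection of all maximal left ideals. -/
def ringJacobson (R : Type*) [Ring R] : TwoSidedIdeal R :=
  TwoSidedIdeal.jacobson ⊥

/-- A ring `R` is *semiperfect* if `R / J(R)` is a semisimple (artinian) ring and every
idempotent of `R / J(R)` can be lifted to an idempotent of `R`. -/
def IsSemiperfectRing (R : Type*) [Ring R] : Prop :=
  IsSemisimpleRing (ringJacobson R).ringCon.Quotient ∧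
  ∀ x : (ringJacobson R).ringCon.Quotient, IsIdempotentElem x →
    ∃ e : R, IsIdempotentElem e ∧ (ringJacobson R).ringCon.mk' e = x

instance int_span_prime_isPrime (p : ℕ) [hp : Fact p.Prime] :
    (Ideal.span {(p : ℤ)}).IsPrime :=
  (Ideal.span_singleton_prime (by exact_mod_cast hp.out.ne_zero)).mpr
    (Int.prime_iff_natAbs_prime.mpr (by simpa using hp.out))

/-- The localisation `ℤ_(p)` of the integers at the prime `p`. -/
abbrev ZLoc (p : ℕ) [Fact p.Prime] : Type :=
  Localization.AtPrime (Ideal.span {(p : ℤ)})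

/-!
The group ring `S[Q₈]` surjects onto Hamilton's quaternions `ℍ[S]`. Semiperfectness passes to
homomorphic images, and a semiperfect ring whose only idempotents are `0` and `1` is local. So if
`ℍ[S]` is a domain and `S[Q₈]` is semiperfect, then `ℍ[S]` is local. But `q = 1 + a i + b j`
satisfies `q + star q = 2`, so when `2` is invertible one of `q` and `star q` is a unit, which makes
their common norm `a ^ 2 + b ^ 2 + 1` a unit. Modulo every prime `p`, `-1` is a sum of two squares,
so over `ℤ_(p)` this norm can be chosen to be a nonunit.
-/

open Quaternion

theorem map_mem_ringJacobson_of_surjective {R T : Type*} [Ring R] [Ring T] {f : R →+* T}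
    (hf : Function.Surjective f) {x : R} (hx : x ∈ ringJacobson R) : f x ∈ ringJacobson T := by
  refine TwoSidedIdeal.mem_jacobson_iff.2 (hf.forall.2 fun y ↦ ?_)
  obtain ⟨z, hz⟩ := TwoSidedIdeal.mem_jacobson_iff.1 hx y
  refine ⟨f z, ?_⟩
  rw [TwoSidedIdeal.mem_bot] at hz ⊢
  simp only [← map_mul, ← map_add, ← map_one f, ← map_sub, hz, map_zero]

theorem exists_mul_one_add_eq_one_of_mem_ringJacobson {R : Type*} [Ring R] {x : R}
    (hx : x ∈ ringJacobson R) : ∃ z, z * (1 + x) = 1 := by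
  obtain ⟨z, hz⟩ := TwoSidedIdeal.mem_jacobson_iff.1 hx 1
  rw [TwoSidedIdeal.mem_bot, sub_eq_zero, mul_one] at hz
  exact ⟨z, by rw [mul_add, mul_one, add_comm, hz]⟩

theorem ringJacobson_mk_eq_mk_iff {R : Type*} [Ring R] {x y : R} :
    (ringJacobson R).ringCon.mk' x = (ringJacobson R).ringCon.mk' y ↔ x - y ∈ ringJacobson R :=
  (RingCon.eq _).trans (TwoSidedIdeal.rel_iff _ _ _)

theorem exists_isIdempotentElem_map_eq_of_surjective {A B : Type*} [Ring A] [IsSemisimpleRing A]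
    [Ring B] {f : A →+* B} (hf : Function.Surjective f) {b : B} (hb : IsIdempotentElem b) :
    ∃ a : A, IsIdempotentElem a ∧ f a = b := by
  obtain ⟨a, rfl⟩ := hf b
  obtain ⟨e, he, hker⟩ := IsSemisimpleRing.ideal_eq_span_idempotent (RingHom.ker f)
  have hfe : f e = 0 := RingHom.mem_ker.1 (hker ▸ Ideal.mem_span_singleton_self e)
  have ker_mul {k : A} (hk : f k = 0) : k * (1 - e) = 0 := by
    obtain ⟨t, rfl⟩ := Ideal.mem_span_singleton'.1 (hker ▸ RingHom.mem_ker.2 hk)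
    rw [mul_assoc, he.mul_one_sub_self, mul_zero]
  refine ⟨a * (1 - e), ?_, by simp [hfe]⟩
  have hfb : f (a * (1 - e) * a - a) = 0 := by simp [hfe, hb.eq]
  have := ker_mul hfb
  rw [sub_mul, sub_eq_zero] at this
  rw [IsIdempotentElem, ← mul_assoc, this]

theorem eq_zero_or_exists_mul_eq_one_of_isSemisimpleRing {A : Type*} [Ring A] [IsSemisimpleRing A]
    (hA : ∀ e : A, IsIdempotentElem e → e = 0 ∨ e = 1) (a : A) : a = 0 ∨ ∃ b, b * a = 1 := by
  obtain ⟨e, he, hspan⟩ := IsSemisimpleRing.ideal_eq_span_idempotent (Ideal.span {a})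
  rcases hA e he with rfl | rfl
  · exact .inl (by simpa using hspan)
  · exact .inr (Ideal.mem_span_singleton'.1 (hspan ▸ Ideal.mem_span_singleton_self 1))

theorem IsSemiperfectRing.of_surjective {R T : Type*} [Ring R] [Ring T]
    (hR : IsSemiperfectRing R) {f : R →+* T} (hf : Function.Surjective f) :
    IsSemiperfectRing T := by
  obtain ⟨semisimple, lifts⟩ := hR
  let g : R →+* (ringJacobson T).ringCon.Quotient := (ringJacobson T).ringCon.mk'.comp f
  let π : (ringJacobson R).ringCon.Quotient →+* (ringJacobson T).ringCon.Quotient :=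
    (ringJacobson R).ringCon.lift g fun x y hxy ↦ ringJacobson_mk_eq_mk_iff.2 <| by
      rw [← map_sub]
      exact map_mem_ringJacobson_of_surjective hf ((TwoSidedIdeal.rel_iff _ _ _).1 hxy)
  have hπ : Function.Surjective π :=
    .of_comp (g := (ringJacobson R).ringCon.mk') ((RingCon.mk'_surjective _).comp hf)
  refine ⟨π.isSemisimpleRing_of_surjective hπ, fun x hx ↦ ?_⟩
  obtain ⟨y, hy, rfl⟩ := exists_isIdempotentElem_map_eq_of_surjective hπ hx
  obtain ⟨e, he, rfl⟩ := lifts y hy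
  exact ⟨f e, he.map f, rfl⟩

theorem isDedekindFiniteMonoid_of_isIdempotentElem_trivial {M : Type*} [MonoidWithZero M]
    (hM : ∀ e : M, IsIdempotentElem e → e = 0 ∨ e = 1) : IsDedekindFiniteMonoid M where
  mul_eq_one_symm {x y} hxy := by
    have idem : IsIdempotentElem (y * x) := by
      rw [IsIdempotentElem, mul_assoc, ← mul_assoc x, hxy, one_mul]
    rcases hM _ idem with h0 | h1
    · have one_eq_zero : (1 : M) = 0 := calc
        1 = x * (y * x) * y := by rw [← mul_assoc, hxy, one_mul, hxy]
        _ = 0 := by rw [h0, mul_zero, zero_mul]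
      rw [h0, one_eq_zero]
    · exact h1

theorem IsSemiperfectRing.isLocalRing {R : Type*} [Ring R] [Nontrivial R]
    (hR : IsSemiperfectRing R) (idem : ∀ e : R, IsIdempotentElem e → e = 0 ∨ e = 1) :
    IsLocalRing R := by
  obtain ⟨semisimple, lifts⟩ := hR
  have idem_quotient (x : (ringJacobson R).ringCon.Quotient) (hx : IsIdempotentElem x) :
      x = 0 ∨ x = 1 := by
    obtain ⟨e, he, rfl⟩ := lifts x hx
    exact (idem e he).imp (by rintro rfl; simp) (by rintro rfl; simp)
  have := isDedekindFiniteMonoid_of_isIdempotentElem_trivial idem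
  have isUnit_one_add {x : R} (hx : x ∈ ringJacobson R) : IsUnit (1 + x) := by
    obtain ⟨z, hz⟩ := exists_mul_one_add_eq_one_of_mem_ringJacobson hx
    exact .of_mul_eq_one_right z hz
  refine .of_isUnit_or_isUnit_one_sub_self fun x ↦ ?_
  rcases eq_zero_or_exists_mul_eq_one_of_isSemisimpleRing idem_quotient
    ((ringJacobson R).ringCon.mk' x) with hx | ⟨b, hb⟩
  · right
    rw [← map_zero (ringJacobson R).ringCon.mk', ringJacobson_mk_eq_mk_iff, sub_zero] at hx
    simpa only [sub_eq_add_neg] using isUnit_one_add (neg_mem hx)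
  · left
    obtain ⟨y, rfl⟩ := RingCon.mk'_surjective _ b
    rw [← map_mul, ← map_one (ringJacobson R).ringCon.mk', ringJacobson_mk_eq_mk_iff] at hb
    exact isUnit_of_mul_isUnit_right (by simpa only [add_sub_cancel] using isUnit_one_add hb)

section QuaternionGroupLift

variable {M : Type*} [Monoid M]

theorem pow_val_add_of_pow_eq_one {m : ℕ} [NeZero m] {x : M} (hx : x ^ m = 1) (i j : ZMod m) :
    x ^ (i + j).val = x ^ i.val * x ^ j.val := by
  rw [ZMod.val_add, ← pow_eq_pow_mod _ hx, pow_add]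

theorem pow_mul_mul_pow_of_mul_mul_eq {x y : M} (hxy : x * y * x = y) (k : ℕ) :
    x ^ k * y * x ^ k = y := by
  induction k with
  | zero => simp
  | succ k ih => calc
      x ^ (k + 1) * y * x ^ (k + 1) = x ^ k * (x * y * x) * x ^ k := by
        nth_rw 1 [pow_succ]
        simp only [pow_succ', mul_assoc]
      _ = y := by rw [hxy, ih]

/-- The homomorphism out of the generalised quaternion group
`⟨a, x | a ^ (2 * n) = 1, x ^ 2 = a ^ n, x⁻¹ * a * x = a⁻¹⟩` given by its universal property: it
sends `a` to `u` and `x` to `v`. The last relation is stated as `u * v * u = v`, so that it makes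
sense in any monoid. -/
def quaternionGroupLift {n : ℕ} [NeZero n] (u v : M) (hu : u ^ (2 * n) = 1) (hv : v * v = u ^ n)
    (huv : u * v * u = v) : QuaternionGroup n →* M where
  toFun
    | .a i => u ^ i.val
    | .xa i => v * u ^ i.val
  map_one' := by simp only [QuaternionGroup.one_def, ZMod.val_zero, pow_zero]
  map_mul' := by
    have pow_add_val := pow_val_add_of_pow_eq_one hu
    have pow_natCast : u ^ (n : ZMod (2 * n)).val = u ^ n := by
      rw [ZMod.val_natCast, ← pow_eq_pow_mod _ hu]
    have pow_mul_v_mul_pow (i j : ZMod (2 * n)) :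
        u ^ i.val * (v * u ^ j.val) = v * u ^ (j - i).val := by
      conv_lhs => rw [← add_sub_cancel i j, pow_add_val, ← mul_assoc, ← mul_assoc,
        pow_mul_mul_pow_of_mul_mul_eq huv]
    rintro (i | i) (j | j)
    · exact pow_add_val i j
    · exact (pow_mul_v_mul_pow i j).symm
    · simp only [QuaternionGroup.xa_mul_a, pow_add_val, mul_assoc]
    · simp only [QuaternionGroup.xa_mul_xa, add_sub_assoc, pow_add_val, pow_natCast, mul_assoc,
        pow_mul_v_mul_pow, ← hv]

end QuaternionGroupLift

section QuaternionBasis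

open QuaternionAlgebra (Basis)

variable {S A : Type*} [CommRing S] [Ring A] [Algebra S A] (b : Basis A (-1 : S) 0 (-1))

/-- The representation of `Q₈` in an algebra with imaginary units `i` and `j`, sending `a` to `i`
and `x` to `j`. -/
def quaternionGroupHomOfBasis : QuaternionGroup 2 →* A :=
  quaternionGroupLift b.i b.j (by rw [pow_mul, pow_two b.i]; simp) (by simp [pow_two]) (by simp)

theorem quaternionGroupHomOfBasis_a_one : quaternionGroupHomOfBasis b (.a 1) = b.i :=
  pow_one b.i

theorem quaternionGroupHomOfBasis_xa_zero : quaternionGroupHomOfBasis b (.xa 0) = b.j :=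
  (congrArg (b.j * ·) (pow_zero b.i)).trans (mul_one b.j)

theorem quaternionGroupHomOfBasis_a_one_mul_xa_zero :
    quaternionGroupHomOfBasis b (.a 1 * .xa 0) = b.k := by
  rw [map_mul, quaternionGroupHomOfBasis_a_one, quaternionGroupHomOfBasis_xa_zero, b.i_mul_j]

/-- The algebra homomorphism `S[Q₈] → A` extending the representation of `Q₈` in `A`. -/
noncomputable def quaternionGroupAlgebraHom : MonoidAlgebra S (QuaternionGroup 2) →ₐ[S] A :=
  MonoidAlgebra.lift S A _ (quaternionGroupHomOfBasis b)

theorem exists_quaternionGroupAlgebraHom_eq_lift (q : ℍ[S]) :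
    ∃ r, quaternionGroupAlgebraHom b r = b.lift q := by
  refine ⟨.single 1 q.re + .single (.a 1) q.imI + .single (.xa 0) q.imJ +
    .single (.a 1 * .xa 0) q.imK, ?_⟩
  simp only [quaternionGroupAlgebraHom, map_add, MonoidAlgebra.lift_single, map_one,
    quaternionGroupHomOfBasis_a_one, quaternionGroupHomOfBasis_xa_zero,
    quaternionGroupHomOfBasis_a_one_mul_xa_zero, Basis.lift, Algebra.algebraMap_eq_smul_one]

variable (S) in
theorem quaternionGroupAlgebraHom_self_surjective :
    Function.Surjective (quaternionGroupAlgebraHom (Basis.self S)) := by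
  intro q
  obtain ⟨r, hr⟩ := exists_quaternionGroupAlgebraHom_eq_lift (Basis.self S) q
  have lift_self : (Basis.self S).lift q = q :=
    DFunLike.congr_fun (QuaternionAlgebra.lift.apply_symm_apply (AlgHom.id S ℍ[S])) q
  exact ⟨r, hr.trans lift_self⟩

end QuaternionBasis

section Quaternion

variable {S : Type*} [CommRing S]

theorem not_isLocalRing_quaternion (h2 : IsUnit (2 : S)) {a b : S}
    (hab : ¬ IsUnit (a ^ 2 + b ^ 2 + 1)) : ¬ IsLocalRing ℍ[S] := by
  intro isLocal
  let q : ℍ[S] := ⟨1, a, b, 0⟩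
  have normSq_q : normSq q = a ^ 2 + b ^ 2 + 1 := by rw [normSq_def']; ring
  have isUnit_add_star : IsUnit (q + star q) := by
    have add_star_eq_two : q + star q = 2 := by
      rw [self_add_star, show q.re = 1 from rfl, coe_one, mul_one]
    simpa only [add_star_eq_two, map_ofNat] using h2.map (algebraMap S ℍ[S])
  rcases IsLocalRing.isUnit_or_isUnit_of_isUnit_add isUnit_add_star with hq | hq
  · exact hab (normSq_q ▸ hq.map normSq)
  · exact hab (normSq_q ▸ normSq_star (a := q) ▸ hq.map normSq)

theorem isDomain_quaternion_of_injective {K : Type*} [CommRing K] [LinearOrder K]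
    [IsStrictOrderedRing K] (f : S →+* K) (hf : Function.Injective f) : IsDomain ℍ[S] := by
  let : LinearOrder S := .lift' f hf
  have : IsStrictOrderedRing S := Function.Injective.isStrictOrderedRing f (map_zero f)
    (map_one f) (map_add f) (map_mul f) .rfl .rfl
  infer_instance

theorem not_isSemiperfectRing_zloc_quaternionGroup_general [IsDomain ℍ[S]] (h2 : IsUnit (2 : S))
    {a b : S} (hab : ¬ IsUnit (a ^ 2 + b ^ 2 + 1)) :
    ¬ IsSemiperfectRing (MonoidAlgebra S (QuaternionGroup 2)) := by
  intro hS
  have semiperfect : IsSemiperfectRing ℍ[S] :=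
    hS.of_surjective (f := (quaternionGroupAlgebraHom (.self S)).toRingHom)
      (quaternionGroupAlgebraHom_self_surjective S)
  exact not_isLocalRing_quaternion h2 hab
    (semiperfect.isLocalRing fun _ ↦ IsIdempotentElem.iff_eq_zero_or_one.1)

end Quaternion

theorem mapToFractionRing_injective {A : Type*} (K B : Type*) [CommRing A] [CommRing K]
    [Algebra A K] [IsFractionRing A K] [CommRing B] [Algebra A B] (M : Submonoid A)
    [IsLocalization M B] (hM : M ≤ nonZeroDivisors A) :
    Function.Injective (Localization.mapToFractionRing K M B hM) :=
  (IsLocalization.lift_injective_iff _).2 fun a b ↦ by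
    rw [(IsLocalization.injective B hM).eq_iff, (IsFractionRing.injective A K).eq_iff]

section ZLoc

variable (p : ℕ) [Fact p.Prime]

instance isDomain_quaternion_zloc : IsDomain ℍ[ZLoc p] :=
  have hM := Ideal.primeCompl_le_nonZeroDivisors (Ideal.span {(p : ℤ)})
  isDomain_quaternion_of_injective (Localization.mapToFractionRing ℚ _ (ZLoc p) hM).toRingHom
    (mapToFractionRing_injective ℚ (ZLoc p) _ hM)

variable {p}

theorem isUnit_natCast_zloc_iff {n : ℕ} : IsUnit (n : ZLoc p) ↔ ¬ p ∣ n := by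
  simpa [Ideal.primeCompl, Ideal.mem_span_singleton, Int.natCast_dvd_natCast] using
    IsLocalization.AtPrime.isUnit_to_map_iff (ZLoc p) (Ideal.span {(p : ℤ)}) (n : ℤ)

theorem isUnit_two_zloc (hp : p ≠ 2) : IsUnit (2 : ZLoc p) := by
  simpa only [Nat.cast_ofNat] using isUnit_natCast_zloc_iff.2
    fun h ↦ hp ((Nat.prime_dvd_prime_iff_eq Fact.out Nat.prime_two).1 h)

variable (p)

theorem exists_not_isUnit_sq_add_sq_add_one_zloc :
    ∃ a b : ZLoc p, ¬ IsUnit (a ^ 2 + b ^ 2 + 1) := by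
  obtain ⟨a, b, k, -, -, hk⟩ := Int.exists_sq_add_sq_add_one_eq_mul p
  refine ⟨a, b, ?_⟩
  have hdvd : p ∣ a ^ 2 + b ^ 2 + 1 := hk ▸ dvd_mul_left p k
  exact_mod_cast mt isUnit_natCast_zloc_iff.1 (not_not_intro hdvd)

end ZLoc

/-- For every odd prime `p`, the group ring `ℤ_(p)Q₈` of the quaternion group of order `8`
is not semiperfect. -/
theorem not_isSemiperfectRing_zloc_quaternionGroup
    (p : ℕ) [Fact p.Prime] (hp : p ≠ 2) :
    ¬ IsSemiperfectRing (MonoidAlgebra (ZLoc p) (QuaternionGroup 2)) := by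
  obtain ⟨a, b, hab⟩ := exists_not_isUnit_sq_add_sq_add_one_zloc p
  exact not_isSemiperfectRing_zloc_quaternionGroup_general (isUnit_two_zloc hp) hab
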